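/- Let μ > 0 and λ > 0 be such that the supremum of E[U(X)] − μ·h(X) − λ·E[ρX] over X ∈ L⁰₊ is finite. If X* ∈ L⁰₊ maximizes E[U(X)] − μ·h(X) − λ·E[ρX] over X ∈ L⁰₊, then U′(X*) − λρ − μ·h′(X*) ≥ 0 a.s. -/

import Mathlib

/-!
With `log t ≤ t - 1` and `1 - e^{-u} ≤ u`, Fubini gives `h(Y) - h(X) ≤ E[(X - Y) ψ_X(Y)]` for the
continuous nonnegative function `ψ_X` with `h′(X) = -ψ_X(X)`. For a maximizer `X`, compare with
the payoff equal to a constant `y ≥ 0` on an arbitrary event where `X` and `ρ` are bounded and to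
`X` elsewhere: since the event is arbitrary, the resulting inequality of expectations holds
pointwise, and by continuity it does so almost surely for all `y ≥ 0` at once,
`U(y) - U(X) ≤ (y - X) (λρ - μ ψ_X(y))`. If `X = 0` then the slope of `U` at `0` would be at most
`λρ`, contradicting `U′(0+) = ∞`. So `X > 0`, and `U(y) - (y - X) (λρ - μ ψ_X(y))` has an interior
maximum at `y = X`; its derivative there is `U′(X) - λρ + μ ψ_X(X)`. The first-order condition thus
holds with equality.
-/

open MeasureTheory Filter Set
open scoped ENNReal

noncomputable section

variable {Ω : Type*} [MeasurableSpace Ω]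

/-- Entropic risk measure `h_a(X) = (1/a) log E[e^{-aX}]`. -/
def entropic (P : Measure Ω) (a : ℝ) (X : Ω → ℝ) : ℝ :=
  (1 / a) * Real.log (∫ ω, Real.exp (-a * X ω) ∂P)

/-- Weighted entropic risk measure `h(X) = ∫_{[a₀,a₁]} h_a(X) m(da)`. -/
def werm (P : Measure Ω) (m : Measure ℝ) (a₀ a₁ : ℝ) (X : Ω → ℝ) : ℝ :=
  ∫ a in Set.Icc a₀ a₁, entropic P a X ∂m

/-- Marginal risk density transform `h′(X) = -∫_{[a₀,a₁]} e^{-aX}/E[e^{-aX}] m(da)`. -/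
def hprime (P : Measure Ω) (m : Measure ℝ) (a₀ a₁ : ℝ) (X : Ω → ℝ) (ω : Ω) : ℝ :=
  -∫ a in Set.Icc a₀ a₁, Real.exp (-a * X ω) / (∫ ω', Real.exp (-a * X ω') ∂P) ∂m

/-- Extended-real-valued expectation `E[f] = ∫ f⁺ - ∫ f⁻ ∈ [-∞,∞]`. -/
def eint (P : Measure Ω) (f : Ω → ℝ) : EReal :=
  ((∫⁻ ω, ENNReal.ofReal (f ω) ∂P : ℝ≥0∞) : EReal)
    - ((∫⁻ ω, ENNReal.ofReal (-(f ω)) ∂P : ℝ≥0∞) : EReal)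

/-- `E[ρX] ∈ [0,∞]` for a nonnegative payoff. -/
def budget (P : Measure Ω) (ρ X : Ω → ℝ) : ℝ≥0∞ := ∫⁻ ω, ENNReal.ofReal (ρ ω * X ω) ∂P

/-- `X ∈ L⁰₊`: a nonnegative random variable. -/
def Lpos (P : Measure Ω) (X : Ω → ℝ) : Prop := Measurable X ∧ ∀ᵐ ω ∂P, 0 ≤ X ω

/-- Objective of the Lagrangian risk-minimization problem: `h(X) + λ E[ρX]`. -/
def robj (P : Measure Ω) (m : Measure ℝ) (a₀ a₁ : ℝ) (ρ : Ω → ℝ) (lam : ℝ) (X : Ω → ℝ) : EReal :=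
  ((werm P m a₀ a₁ X : ℝ) : EReal) + (lam : EReal) * ((budget P ρ X : ℝ≥0∞) : EReal)

/-- `ψ_X(y) = ∫_{[a₀,a₁]} e^{-ay} / E[e^{-aX}] m(da)`. -/
def psi (P : Measure Ω) (m : Measure ℝ) (a₀ a₁ : ℝ) (X : Ω → ℝ) (y : ℝ) : ℝ :=
  ∫ a in Set.Icc a₀ a₁, Real.exp (-a * y) / (∫ ω, Real.exp (-a * X ω) ∂P) ∂m

/-- Inverse of `ψ_X` on `(0,∞)` (realized via `sSup`, since `ψ_X` is continuous, strictly
decreasing with limits `∞` at `-∞` and `0` at `∞`). -/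
def psiInv (P : Measure Ω) (m : Measure ℝ) (a₀ a₁ : ℝ) (X : Ω → ℝ) (z : ℝ) : ℝ :=
  sSup {y : ℝ | z ≤ psi P m a₀ a₁ X y}

/-- The transform `𝐓X = max(ψ_X⁻¹(λρ), 0)`. -/
def Ttrans (P : Measure Ω) (m : Measure ℝ) (a₀ a₁ lam : ℝ) (ρ : Ω → ℝ) (X : Ω → ℝ) : Ω → ℝ :=
  fun ω => max (psiInv P m a₀ a₁ X (lam * ρ ω)) 0

/-- `X ∈ 𝒳(x)`: nonnegative and `E[ρX] ≤ x`. -/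
def feasible (P : Measure Ω) (ρ : Ω → ℝ) (x : ℝ) (X : Ω → ℝ) : Prop :=
  Lpos P X ∧ budget P ρ X ≤ ENNReal.ofReal x

/-- `γ₁(x)`: the minimal value of `h` over `𝒳(x)`. -/
def gamma1 (P : Measure Ω) (m : Measure ℝ) (a₀ a₁ : ℝ) (ρ : Ω → ℝ) (x : ℝ) : ℝ :=
  sInf (werm P m a₀ a₁ '' {X | feasible P ρ x X})

/-- Expected utility `E[U(X)] ∈ [-∞,∞]`. -/
def eutil (P : Measure Ω) (U : ℝ → ℝ) (X : Ω → ℝ) : EReal := eint P (fun ω => U (X ω))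

/-- Full Lagrangian objective `E[U(X)] - μ h(X) - λ E[ρX]`. -/
def fullObj (P : Measure Ω) (m : Measure ℝ) (a₀ a₁ : ℝ) (ρ : Ω → ℝ) (U : ℝ → ℝ)
    (μ lam : ℝ) (X : Ω → ℝ) : EReal :=
  eutil P U X - ((μ * werm P m a₀ a₁ X : ℝ) : EReal)
    - (lam : EReal) * ((budget P ρ X : ℝ≥0∞) : EReal)

open ProbabilityTheory

section FirstOrder

lemma exists_mul_sub_lt_sub_of_tendsto_deriv_atTop {U U' : ℝ → ℝ} {x : ℝ}
    (hUc : ContinuousOn U (Ici x)) (hUd : ∀ y, x < y → HasDerivAt U (U' y) y)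
    (hU' : Tendsto U' (nhdsWithin x (Ioi x)) atTop) (K : ℝ) :
    ∃ y, x < y ∧ K * (y - x) < U y - U x := by
  obtain ⟨y, hxy, hy⟩ := mem_nhdsGT_iff_exists_Ioo_subset.1 (hU'.eventually_gt_atTop K)
  obtain ⟨c, hc, hslope⟩ := exists_hasDerivAt_eq_slope U U' hxy
    (hUc.mono Icc_subset_Ici_self) fun z hz => hUd z hz.1
  have hKc : K < U' c := hy hc
  rw [hslope, lt_div_iff₀ (sub_pos.2 hxy)] at hKc
  exact ⟨y, hxy, hKc⟩

lemma hasDerivAt_sub_mul_of_continuousAt {g : ℝ → ℝ} {x : ℝ} (hg : ContinuousAt g x) :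
    HasDerivAt (fun y => (y - x) * g y) (g x) x := by
  refine hasDerivAt_iff_tendsto_slope.2 ((hg.tendsto.mono_left nhdsWithin_le_nhds).congr' ?_)
  filter_upwards [self_mem_nhdsWithin] with y hy
  have hyx : y - x ≠ 0 := sub_ne_zero.2 hy
  simp [slope_def_field, hyx]

lemma hasDerivAt_eq_of_eventually_sub_le_mul {U g : ℝ → ℝ} {u x : ℝ} (hU : HasDerivAt U u x)
    (hg : ContinuousAt g x) (h : ∀ᶠ y in nhds x, U y - U x ≤ (y - x) * g y) : u = g x := by
  have hmax : IsLocalMax (fun y => U y - (y - x) * g y) x := by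
    filter_upwards [h] with y hy
    linarith
  exact sub_eq_zero.1 (hmax.hasDerivAt_eq_zero (hU.sub (hasDerivAt_sub_mul_of_continuousAt hg)))

lemma lt_of_forall_sub_le_mul {U U' g : ℝ → ℝ} {b x K : ℝ} (hUc : ContinuousOn U (Ici b))
    (hUd : ∀ y, b < y → HasDerivAt U (U' y) y) (hU' : Tendsto U' (nhdsWithin b (Ioi b)) atTop)
    (hx : b ≤ x) (hg : ∀ y, b < y → g y ≤ K)
    (h : ∀ y, b < y → U y - U x ≤ (y - x) * g y) : b < x := by
  refine hx.lt_of_ne ?_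
  rintro rfl
  obtain ⟨y, hy, hlt⟩ := exists_mul_sub_lt_sub_of_tendsto_deriv_atTop hUc hUd hU' K
  have hle : (y - b) * g y ≤ (y - b) * K :=
    mul_le_mul_of_nonneg_left (hg y hy) (sub_nonneg.2 hy.le)
  linarith [h y hy]

end FirstOrder

lemma ae_forall_le_of_continuous {Y β : Type*} [TopologicalSpace Y]
    [TopologicalSpace.SeparableSpace Y] [TopologicalSpace β] [Preorder β] [OrderClosedTopology β]
    {P : Measure Ω} {f g : Y → Ω → β}
    (hf : ∀ ω, Continuous fun y => f y ω) (hg : ∀ ω, Continuous fun y => g y ω)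
    (h : ∀ y, ∀ᵐ ω ∂P, f y ω ≤ g y ω) : ∀ᵐ ω ∂P, ∀ y, f y ω ≤ g y ω := by
  obtain ⟨s, hs, hdense⟩ := TopologicalSpace.exists_countable_dense Y
  filter_upwards [(ae_ball_iff hs).2 fun y _ => h y] with ω hω y
  exact hdense.induction (P := fun y => f y ω ≤ g y ω) hω (isClosed_le (hf ω) (hg ω)) y

section Risk

lemma exp_neg_mul_sub_le (a x y : ℝ) :
    Real.exp (-a * y) - Real.exp (-a * x) ≤ a * ((x - y) * Real.exp (-a * y)) := by
  have hfactor : Real.exp (-a * x) = Real.exp (-a * y) * Real.exp (-(a * (x - y))) := by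
    rw [← Real.exp_add]
    ring_nf
  nlinarith [Real.one_sub_le_exp_neg (a * (x - y)), Real.exp_pos (-a * y)]

lemma psi_nonneg (P : Measure Ω) (m : Measure ℝ) (a₀ a₁ : ℝ) (X : Ω → ℝ) (y : ℝ) :
    0 ≤ psi P m a₀ a₁ X y :=
  integral_nonneg fun _ => div_nonneg (Real.exp_pos _).le mgf_nonneg

lemma entropic_sub_le_integral {P : Measure Ω} [NeZero P] {a : ℝ} {X Y : Ω → ℝ} (ha : 0 < a)
    (hX : Integrable (fun ω => Real.exp (-a * X ω)) P)
    (hY : Integrable (fun ω => Real.exp (-a * Y ω)) P)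
    (hXY : Integrable (fun ω => (X ω - Y ω) * Real.exp (-a * Y ω)) P) :
    entropic P a Y - entropic P a X ≤
      ∫ ω, (X ω - Y ω) * (Real.exp (-a * Y ω) / mgf X P (-a)) ∂P := by
  have hMX : 0 < mgf X P (-a) := mgf_pos' (NeZero.ne P) hX
  have hMY : 0 < mgf Y P (-a) := mgf_pos' (NeZero.ne P) hY
  have hlog : Real.log (mgf Y P (-a)) - Real.log (mgf X P (-a)) ≤
      (mgf Y P (-a) - mgf X P (-a)) / mgf X P (-a) := by
    rw [← Real.log_div hMY.ne' hMX.ne', sub_div, div_self hMX.ne']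
    exact Real.log_le_sub_one_of_pos (div_pos hMY hMX)
  have hmgf : mgf Y P (-a) - mgf X P (-a) ≤
      a * ∫ ω, (X ω - Y ω) * Real.exp (-a * Y ω) ∂P := by
    rw [mgf, mgf, ← integral_sub hY hX, ← integral_const_mul]
    exact integral_mono (hY.sub hX) (hXY.const_mul a) fun ω => exp_neg_mul_sub_le a _ _
  calc entropic P a Y - entropic P a X
      = (1 / a) * (Real.log (mgf Y P (-a)) - Real.log (mgf X P (-a))) := (mul_sub _ _ _).symm
    _ ≤ (1 / a) * ((a * ∫ ω, (X ω - Y ω) * Real.exp (-a * Y ω) ∂P) / mgf X P (-a)) := by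
        gcongr
        exact hlog.trans (by gcongr)
    _ = ∫ ω, (X ω - Y ω) * (Real.exp (-a * Y ω) / mgf X P (-a)) ∂P := by
        simp only [← mul_div_assoc, integral_div]
        field_simp

variable {P : Measure Ω} [IsFiniteMeasure P] {m : Measure ℝ} [IsFiniteMeasure m]
  {a a₀ a₁ : ℝ} {X Y : Ω → ℝ}

lemma Lpos.integrable_exp_neg_mul (hX : Lpos P X) (ha : 0 ≤ a) :
    Integrable (fun ω => Real.exp (-a * X ω)) P := by
  have hXm := hX.1
  refine .of_mem_Icc 0 1 (by fun_prop) ?_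
  filter_upwards [hX.2] with ω hω
  exact ⟨(Real.exp_pos _).le, Real.exp_le_one_iff.2 (by nlinarith)⟩

lemma Lpos.continuousOn_mgf_neg (hX : Lpos P X) (ha₀ : 0 < a₀) :
    ContinuousOn (fun a => mgf X P (-a)) (Icc a₀ a₁) := by
  have hsub : Iio 0 ⊆ interior (integrableExpSet X P) :=
    interior_maximal (fun t ht => by
      simpa [integrableExpSet] using hX.integrable_exp_neg_mul (neg_nonneg.2 (mem_Iio.1 ht).le))
      isOpen_Iio
  exact continuousOn_mgf.comp continuousOn_neg fun a ha =>
    hsub (neg_lt_zero.2 (ha₀.trans_le ha.1))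

variable [NeZero P]

lemma Lpos.mgf_neg_pos (hX : Lpos P X) (ha : 0 ≤ a) : 0 < mgf X P (-a) :=
  mgf_pos' (NeZero.ne P) (hX.integrable_exp_neg_mul ha)

lemma Lpos.integrableOn_entropic (hX : Lpos P X) (ha₀ : 0 < a₀) :
    IntegrableOn (fun a => entropic P a X) (Icc a₀ a₁) m := by
  have hcont : ContinuousOn (fun a => 1 / a * Real.log (mgf X P (-a))) (Icc a₀ a₁) :=
    (continuousOn_const.div continuousOn_id fun a ha => (ha₀.trans_le ha.1).ne').mul
      ((hX.continuousOn_mgf_neg ha₀).log fun a ha => (hX.mgf_neg_pos (ha₀.le.trans ha.1)).ne')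
  exact hcont.integrableOn_compact isCompact_Icc

lemma Lpos.integrableOn_inv_mgf_neg (hX : Lpos P X) (ha₀ : 0 < a₀) :
    IntegrableOn (fun a => (mgf X P (-a))⁻¹) (Icc a₀ a₁) m :=
  ((hX.continuousOn_mgf_neg ha₀).inv₀ fun _ ha =>
    (hX.mgf_neg_pos (ha₀.le.trans ha.1)).ne').integrableOn_compact isCompact_Icc

lemma Lpos.continuousOn_psi (hX : Lpos P X) (ha₀ : 0 < a₀) :
    ContinuousOn (psi P m a₀ a₁ X) (Ici 0) := by
  have hw := hX.integrableOn_inv_mgf_neg (m := m) (a₁ := a₁) ha₀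
  refine continuousOn_of_dominated (bound := fun a => (mgf X P (-a))⁻¹) (fun y _ => ?_)
    (fun y hy => ?_) hw (ae_of_all _ fun a => by fun_prop)
  · exact (Continuous.aestronglyMeasurable (by fun_prop)).mul hw.1
  · filter_upwards [ae_restrict_mem measurableSet_Icc] with a ha
    change ‖Real.exp (-a * y) / mgf X P (-a)‖ ≤ _
    rw [Real.norm_of_nonneg (div_nonneg (Real.exp_pos _).le mgf_nonneg), div_eq_mul_inv]
    refine mul_le_of_le_one_left (inv_nonneg.2 mgf_nonneg) (Real.exp_le_one_iff.2 ?_)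
    nlinarith [mem_Ici.1 hy, ha.1]

lemma integrable_prod_mul_exp_div_mgf (hX : Lpos P X) (hY : Lpos P Y) (ha₀ : 0 < a₀)
    {f : Ω → ℝ} (hf : Integrable f P) :
    Integrable (fun z : Ω × ℝ => f z.1 * (Real.exp (-z.2 * Y z.1) / mgf X P (-z.2)))
      (P.prod (m.restrict (Icc a₀ a₁))) := by
  have hYm := hY.1
  have hbound : ∀ᵐ z ∂P.prod (m.restrict (Icc a₀ a₁)), ‖Real.exp (-z.2 * Y z.1)‖ ≤ 1 := by
    filter_upwards [Measure.quasiMeasurePreserving_fst.ae hY.2,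
      Measure.quasiMeasurePreserving_snd.ae (ae_restrict_mem measurableSet_Icc)] with z hz ha
    rw [Real.norm_of_nonneg (Real.exp_pos _).le, Real.exp_le_one_iff]
    nlinarith [ha.1]
  refine ((hf.mul_prod (hX.integrableOn_inv_mgf_neg (m := m) (a₁ := a₁) ha₀)).bdd_mul
    (Measurable.aestronglyMeasurable (by fun_prop)) hbound).congr (ae_of_all _ fun z => ?_)
  ring

lemma integrable_mul_psi (hX : Lpos P X) (hY : Lpos P Y) (ha₀ : 0 < a₀) {f : Ω → ℝ}
    (hf : Integrable f P) : Integrable (fun ω => f ω * psi P m a₀ a₁ X (Y ω)) P := by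
  simpa only [integral_const_mul] using!
    (integrable_prod_mul_exp_div_mgf hX hY ha₀ hf (m := m) (a₁ := a₁)).integral_prod_left

lemma integral_mul_psi (hX : Lpos P X) (hY : Lpos P Y) (ha₀ : 0 < a₀) {f : Ω → ℝ}
    (hf : Integrable f P) :
    ∫ ω, f ω * psi P m a₀ a₁ X (Y ω) ∂P =
      ∫ a in Icc a₀ a₁, ∫ ω, f ω * (Real.exp (-a * Y ω) / mgf X P (-a)) ∂P ∂m := by
  rw [← integral_integral_swap (integrable_prod_mul_exp_div_mgf hX hY ha₀ hf)]
  simp only [integral_const_mul]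
  rfl

lemma werm_sub_le_integral_psi (hX : Lpos P X) (hY : Lpos P Y) (ha₀ : 0 < a₀)
    (hXY : Integrable (fun ω => X ω - Y ω) P) :
    werm P m a₀ a₁ Y - werm P m a₀ a₁ X ≤ ∫ ω, (X ω - Y ω) * psi P m a₀ a₁ X (Y ω) ∂P := by
  rw [integral_mul_psi hX hY ha₀ hXY, werm, werm,
    ← integral_sub (hY.integrableOn_entropic ha₀) (hX.integrableOn_entropic ha₀)]
  refine setIntegral_mono_on
    ((hY.integrableOn_entropic ha₀).sub (hX.integrableOn_entropic ha₀))
    (integrable_prod_mul_exp_div_mgf hX hY ha₀ hXY).integral_prod_right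
    measurableSet_Icc fun a ha => ?_
  have ha_pos : 0 < a := ha₀.trans_le ha.1
  have hexpY := hY.integrable_exp_neg_mul ha_pos.le
  refine entropic_sub_le_integral ha_pos (hX.integrable_exp_neg_mul ha_pos.le) hexpY ?_
  refine hXY.mul_bdd (c := 1) hexpY.1 ?_
  filter_upwards [hY.2] with ω hω
  rw [Real.norm_of_nonneg (Real.exp_pos _).le, Real.exp_le_one_iff]
  nlinarith

end Risk

section Objective

variable {P : Measure Ω} {m : Measure ℝ} {a₀ a₁ μ lam : ℝ} {ρ X Y : Ω → ℝ} {U : ℝ → ℝ}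

lemma Lpos.ae_nonneg_mul (hX : Lpos P X) (hρ : 0 ≤ᵐ[P] ρ) : 0 ≤ᵐ[P] fun ω => ρ ω * X ω := by
  filter_upwards [hX.2, hρ] with ω hω hρω using mul_nonneg hρω hω

lemma Lpos.aemeasurable_comp (hX : Lpos P X) (hU : ContinuousOn U (Ici 0)) :
    AEMeasurable (fun ω => U (X ω)) P := by
  have hext : Continuous fun y => U (max y 0) :=
    hU.comp_continuous (by fun_prop) fun y => le_max_right y 0
  refine (hext.measurable.comp hX.1).aemeasurable.congr ?_
  filter_upwards [hX.2] with ω hω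
  simp only [Function.comp_apply, max_eq_left hω]

lemma eint_eq_integral {f : Ω → ℝ} (hf : Integrable f P) :
    eint P f = ((∫ ω, f ω ∂P : ℝ) : EReal) := by
  rw [eint, integral_eq_lintegral_pos_part_sub_lintegral_neg_part hf, EReal.coe_sub,
    EReal.coe_ennreal_toReal hf.lintegral_lt_top.ne,
    EReal.coe_ennreal_toReal hf.fun_neg.lintegral_lt_top.ne]

lemma integrable_of_eint_ne {f : Ω → ℝ} (hf : AEMeasurable f P) (hbot : eint P f ≠ ⊥)
    (htop : eint P f ≠ ⊤) : Integrable f P := by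
  -- In `EReal`, `⊤ - ⊤ = ⊥`: an infinite negative part gives `⊥` whatever the positive part is.
  have hneg : ∫⁻ ω, ENNReal.ofReal (-f ω) ∂P ≠ ∞ := fun h => hbot (by
    rw [eint, h, EReal.coe_ennreal_top, EReal.sub_top])
  have hpos : ∫⁻ ω, ENNReal.ofReal (f ω) ∂P ≠ ∞ := fun h => htop (by
    rw [eint, h, EReal.coe_ennreal_top, EReal.top_sub (by simpa using hneg)])
  have henorm : ∀ ω, ‖f ω‖ₑ ≤ ENNReal.ofReal (f ω) + ENNReal.ofReal (-f ω) := fun ω => by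
    rw [Real.enorm_eq_ofReal_abs]
    rcases abs_choice (f ω) with h | h <;> rw [h]
    exacts [le_self_add, le_add_self]
  refine ⟨hf.aestronglyMeasurable, (lintegral_mono henorm).trans_lt ?_⟩
  rw [lintegral_add_left' hf.ennreal_ofReal]
  exact ENNReal.add_lt_top.2 ⟨hpos.lt_top, hneg.lt_top⟩

lemma budget_eq_integral (hρX : Integrable (fun ω => ρ ω * X ω) P)
    (h0 : 0 ≤ᵐ[P] fun ω => ρ ω * X ω) :
    ((budget P ρ X : ℝ≥0∞) : EReal) = ((∫ ω, ρ ω * X ω ∂P : ℝ) : EReal) := by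
  rw [budget, ← ofReal_integral_eq_lintegral_ofReal hρX h0, EReal.coe_ennreal_ofReal,
    max_eq_left (integral_nonneg_of_ae h0)]

lemma fullObj_eq_integral (hU : Integrable (fun ω => U (X ω)) P)
    (hρX : Integrable (fun ω => ρ ω * X ω) P) (h0 : 0 ≤ᵐ[P] fun ω => ρ ω * X ω) :
    fullObj P m a₀ a₁ ρ U μ lam X =
      ((∫ ω, U (X ω) ∂P - μ * werm P m a₀ a₁ X - lam * ∫ ω, ρ ω * X ω ∂P : ℝ) : EReal) := by
  rw [fullObj, eutil, eint_eq_integral hU, budget_eq_integral hρX h0]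
  norm_cast

lemma budget_ne_top_of_fullObj_ne_bot (hlam : 0 < lam)
    (h : fullObj P m a₀ a₁ ρ U μ lam X ≠ ⊥) : budget P ρ X ≠ ∞ := fun hb => h (by
  rw [fullObj, hb, EReal.coe_ennreal_top, EReal.coe_mul_top_of_pos hlam, EReal.sub_top])

lemma integrable_cost_of_fullObj_ne_bot (hlam : 0 < lam)
    (hmeas : AEMeasurable (fun ω => ρ ω * X ω) P) (h0 : 0 ≤ᵐ[P] fun ω => ρ ω * X ω)
    (h : fullObj P m a₀ a₁ ρ U μ lam X ≠ ⊥) : Integrable (fun ω => ρ ω * X ω) P :=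
  (lintegral_ofReal_ne_top_iff_integrable hmeas.aestronglyMeasurable h0).1
    (budget_ne_top_of_fullObj_ne_bot hlam h)

lemma integrable_utility_of_fullObj_ne (hlam : 0 < lam)
    (hmeas : AEMeasurable (fun ω => U (X ω)) P)
    (hbot : fullObj P m a₀ a₁ ρ U μ lam X ≠ ⊥) (htop : fullObj P m a₀ a₁ ρ U μ lam X ≠ ⊤) :
    Integrable (fun ω => U (X ω)) P := by
  have hbudget := budget_ne_top_of_fullObj_ne_bot hlam hbot
  refine integrable_of_eint_ne hmeas (fun h => hbot ?_) fun h => htop ?_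
  · rw [fullObj, eutil, h, EReal.bot_sub, EReal.bot_sub]
  · rw [fullObj, eutil, h, EReal.top_sub_coe, EReal.top_sub]
    lift budget P ρ X to NNReal using hbudget with b
    exact EReal.coe_ne_top (lam * b)

end Objective

/-- `Y` is an admissible payoff with finite expected utility and cost, at finite `L¹` distance from
`X`. The maximizer is compared with such payoffs only; `X` itself need not be integrable. -/
structure IsCompetitor (P : Measure Ω) (ρ : Ω → ℝ) (U : ℝ → ℝ) (X Y : Ω → ℝ) : Prop where
  lpos : Lpos P Y
  utility : Integrable (fun ω => U (Y ω)) P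
  cost : Integrable (fun ω => ρ ω * Y ω) P
  diff : Integrable (fun ω => X ω - Y ω) P

section Variation

variable {P : Measure Ω} {m : Measure ℝ} {a₀ a₁ μ lam : ℝ} {ρ X Y Z : Ω → ℝ} {U : ℝ → ℝ}

lemma Lpos.isCompetitor_self_of_fullObj_ne (hX : Lpos P X) (hU : ContinuousOn U (Ici 0))
    (hmρ : Measurable ρ) (hρ : 0 ≤ᵐ[P] ρ) (hlam : 0 < lam)
    (hbot : fullObj P m a₀ a₁ ρ U μ lam X ≠ ⊥) (htop : fullObj P m a₀ a₁ ρ U μ lam X ≠ ⊤) :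
    IsCompetitor P ρ U X X where
  lpos := hX
  utility := integrable_utility_of_fullObj_ne hlam (hX.aemeasurable_comp hU) hbot htop
  cost := integrable_cost_of_fullObj_ne_bot hlam (hmρ.mul hX.1).aemeasurable
    (hX.ae_nonneg_mul hρ) hbot
  diff := by simp

open scoped Classical in
lemma IsCompetitor.piecewise (hZ : IsCompetitor P ρ U X Z) {s : Set Ω} (hs : MeasurableSet s)
    (hY : Lpos P Y) (hutility : IntegrableOn (fun ω => U (Y ω)) s P)
    (hcost : IntegrableOn (fun ω => ρ ω * Y ω) s P)
    (hdiff : IntegrableOn (fun ω => X ω - Y ω) s P) :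
    IsCompetitor P ρ U X (s.piecewise Y Z) where
  lpos := by
    refine ⟨hY.1.piecewise hs hZ.lpos.1, ?_⟩
    filter_upwards [hY.2, hZ.lpos.2] with ω hYω hZω
    by_cases hω : ω ∈ s <;> simpa [hω]
  utility := by
    simpa only [apply_piecewise s Y Z fun _ => U] using!
      Integrable.piecewise hs hutility hZ.utility.integrableOn
  cost := by
    simpa only [apply_piecewise s Y Z fun ω y => ρ ω * y] using!
      Integrable.piecewise hs hcost hZ.cost.integrableOn
  diff := by
    simpa only [apply_piecewise s Y Z fun ω y => X ω - y] using!
      Integrable.piecewise hs hdiff hZ.diff.integrableOn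

lemma integrableOn_of_ae_nonneg_of_le [IsFiniteMeasure P] {f : Ω → ℝ} (hf : AEMeasurable f P)
    (h0 : 0 ≤ᵐ[P] f) {s : Set Ω} (hs : MeasurableSet s) {C : ℝ} (hC : ∀ ω ∈ s, f ω ≤ C) :
    IntegrableOn f s P := by
  refine .of_mem_Icc 0 C hf.restrict ?_
  filter_upwards [ae_restrict_mem hs, ae_restrict_of_ae h0] with ω hω h0ω using ⟨h0ω, hC ω hω⟩

variable [IsFiniteMeasure P] [NeZero P] [IsFiniteMeasure m]

lemma IsCompetitor.integrable_marginal (hX : IsCompetitor P ρ U X X)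
    (hY : IsCompetitor P ρ U X Y) (ha₀ : 0 < a₀) :
    Integrable (fun ω => (Y ω - X ω) * (lam * ρ ω - μ * psi P m a₀ a₁ X (Y ω))) P := by
  refine (((hY.cost.sub hX.cost).const_mul lam).add
    ((integrable_mul_psi hX.lpos hY.lpos ha₀ (m := m) (a₁ := a₁) hY.diff).const_mul μ)).congr
      (ae_of_all _ fun ω => ?_)
  simp only [Pi.add_apply, Pi.sub_apply]
  ring

lemma integral_utility_sub_le_of_isMaxOn (hX : IsCompetitor P ρ U X X)
    (hY : IsCompetitor P ρ U X Y) (ha₀ : 0 < a₀) (hμ : 0 ≤ μ) (hρ : 0 ≤ᵐ[P] ρ)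
    (hmax : IsMaxOn (fullObj P m a₀ a₁ ρ U μ lam) {Z | Lpos P Z} X) :
    ∫ ω, U (Y ω) - U (X ω) ∂P ≤
      ∫ ω, (Y ω - X ω) * (lam * ρ ω - μ * psi P m a₀ a₁ X (Y ω)) ∂P := by
  have hobj := isMaxOn_iff.1 hmax Y hY.lpos
  rw [fullObj_eq_integral hY.utility hY.cost (hY.lpos.ae_nonneg_mul hρ),
    fullObj_eq_integral hX.utility hX.cost (hX.lpos.ae_nonneg_mul hρ),
    EReal.coe_le_coe_iff] at hobj
  have hrisk := mul_le_mul_of_nonneg_left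
    (werm_sub_le_integral_psi (m := m) (a₁ := a₁) hX.lpos hY.lpos ha₀ hY.diff) hμ
  have hcost : Integrable (fun ω => ρ ω * Y ω - ρ ω * X ω) P := hY.cost.sub hX.cost
  calc ∫ ω, U (Y ω) - U (X ω) ∂P
      = ∫ ω, U (Y ω) ∂P - ∫ ω, U (X ω) ∂P := integral_sub hY.utility hX.utility
    _ ≤ lam * (∫ ω, ρ ω * Y ω ∂P - ∫ ω, ρ ω * X ω ∂P)
          + μ * ∫ ω, (X ω - Y ω) * psi P m a₀ a₁ X (Y ω) ∂P := by linarith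
    _ = ∫ ω, lam * (ρ ω * Y ω - ρ ω * X ω)
          + μ * ((X ω - Y ω) * psi P m a₀ a₁ X (Y ω)) ∂P := by
        rw [integral_add (hcost.const_mul lam)
          ((integrable_mul_psi hX.lpos hY.lpos ha₀ (m := m) (a₁ := a₁) hY.diff).const_mul μ),
          integral_const_mul, integral_const_mul, integral_sub hY.cost hX.cost]
    _ = ∫ ω, (Y ω - X ω) * (lam * ρ ω - μ * psi P m a₀ a₁ X (Y ω)) ∂P := by
        congr with ω
        ring

lemma ae_utility_sub_le_of_isCompetitor (hX : IsCompetitor P ρ U X X)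
    (hY : IsCompetitor P ρ U X Y) (ha₀ : 0 < a₀) (hμ : 0 ≤ μ) (hρ : 0 ≤ᵐ[P] ρ)
    (hmax : IsMaxOn (fullObj P m a₀ a₁ ρ U μ lam) {Z | Lpos P Z} X) :
    ∀ᵐ ω ∂P, U (Y ω) - U (X ω) ≤ (Y ω - X ω) * (lam * ρ ω - μ * psi P m a₀ a₁ X (Y ω)) := by
  classical
  refine ae_le_of_forall_setIntegral_le (hY.utility.sub hX.utility)
    (hX.integrable_marginal hY ha₀) fun s hs _ => ?_
  have hswitch := integral_utility_sub_le_of_isMaxOn hX (hX.piecewise hs hY.lpos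
    hY.utility.integrableOn hY.cost.integrableOn hY.diff.integrableOn) ha₀ hμ hρ hmax
  rw [← integral_indicator hs, ← integral_indicator hs]
  convert hswitch using 3 with ω ω <;> by_cases hω : ω ∈ s <;> simp [hω]

lemma ae_utility_sub_le_of_nonneg (hX : IsCompetitor P ρ U X X) (ha₀ : 0 < a₀) (hμ : 0 ≤ μ)
    (hmρ : Measurable ρ) (hρ : 0 ≤ᵐ[P] ρ)
    (hmax : IsMaxOn (fullObj P m a₀ a₁ ρ U μ lam) {Z | Lpos P Z} X) {y : ℝ} (hy : 0 ≤ y) :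
    ∀ᵐ ω ∂P, U y - U (X ω) ≤ (y - X ω) * (lam * ρ ω - μ * psi P m a₀ a₁ X y) := by
  have hXm := hX.lpos.1
  let s : ℕ → Set Ω := fun N => {ω | X ω ≤ N ∧ ρ ω ≤ N}
  have hs (N : ℕ) : MeasurableSet (s N) :=
    (measurableSet_le hXm measurable_const).inter (measurableSet_le hmρ measurable_const)
  have hXs (N : ℕ) : IntegrableOn X (s N) P :=
    integrableOn_of_ae_nonneg_of_le hXm.aemeasurable hX.lpos.2 (hs N) fun _ hω => hω.1
  have hρs (N : ℕ) : IntegrableOn ρ (s N) P :=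
    integrableOn_of_ae_nonneg_of_le hmρ.aemeasurable hρ (hs N) fun _ hω => hω.2
  have hconst (N : ℕ) :=
    hX.piecewise (Y := fun _ => y) (hs N) ⟨measurable_const, ae_of_all _ fun _ => hy⟩
      (integrable_const (U y)) ((hρs N).mul_const y) ((hXs N).fun_sub (integrable_const y))
  filter_upwards [ae_all_iff.2 fun N =>
    ae_utility_sub_le_of_isCompetitor hX (hconst N) ha₀ hμ hρ hmax] with ω hω
  obtain ⟨N, hN⟩ := exists_nat_ge (max (X ω) (ρ ω))
  have hmem : ω ∈ s N := max_le_iff.1 hN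
  simpa only [piecewise_eq_of_mem, hmem] using hω N

lemma ae_forall_utility_sub_le (hX : IsCompetitor P ρ U X X) (ha₀ : 0 < a₀) (hμ : 0 ≤ μ)
    (hmρ : Measurable ρ) (hρ : 0 ≤ᵐ[P] ρ) (hU : ContinuousOn U (Ici 0))
    (hmax : IsMaxOn (fullObj P m a₀ a₁ ρ U μ lam) {Z | Lpos P Z} X) :
    ∀ᵐ ω ∂P, ∀ y, 0 ≤ y →
      U y - U (X ω) ≤ (y - X ω) * (lam * ρ ω - μ * psi P m a₀ a₁ X y) := by
  have hUc : Continuous fun y : Ici (0 : ℝ) => U y := hU.domRestrict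
  have hpsi : Continuous fun y : Ici (0 : ℝ) => psi P m a₀ a₁ X y :=
    (hX.lpos.continuousOn_psi ha₀).domRestrict
  have hall := ae_forall_le_of_continuous (fun ω => hUc.sub continuous_const)
    (fun ω => (continuous_subtype_val.sub continuous_const).mul
      (continuous_const.sub (hpsi.const_mul μ)))
    fun y : Ici (0 : ℝ) => ae_utility_sub_le_of_nonneg hX ha₀ hμ hmρ hρ hmax y.2
  filter_upwards [hall] with ω hω y hy using hω ⟨y, hy⟩

end Variation

theorem eu_lagrangian_foc_ge_general (P : Measure Ω) [IsFiniteMeasure P] [NeZero P]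
    (a₀ a₁ : ℝ) (ha₀ : 0 < a₀) (m : Measure ℝ) [IsFiniteMeasure m]
    (ρ : Ω → ℝ) (hmρ : Measurable ρ) (hρ0 : 0 ≤ᵐ[P] ρ)
    (U U' : ℝ → ℝ) (hUc : ContinuousOn U (Ici 0))
    (hUd : ∀ y : ℝ, 0 < y → HasDerivAt U (U' y) y)
    (hInada0 : Tendsto U' (nhdsWithin 0 (Ioi 0)) atTop)
    (μ lam : ℝ) (hμ : 0 ≤ μ) (hlam : 0 < lam) (X : Ω → ℝ) (hX : Lpos P X)
    (hbot : fullObj P m a₀ a₁ ρ U μ lam X ≠ ⊥) (htop : fullObj P m a₀ a₁ ρ U μ lam X ≠ ⊤)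
    (hmax : IsMaxOn (fullObj P m a₀ a₁ ρ U μ lam) {Y | Lpos P Y} X) :
    ∀ᵐ ω ∂P, U' (X ω) - lam * ρ ω - μ * hprime P m a₀ a₁ X ω = 0 := by
  have hcomp : IsCompetitor P ρ U X X :=
    hX.isCompetitor_self_of_fullObj_ne hUc hmρ hρ0 hlam hbot htop
  filter_upwards [ae_forall_utility_sub_le hcomp ha₀ hμ hmρ hρ0 hUc hmax, hX.2]
    with ω hvar hXω
  have hpos : 0 < X ω := lt_of_forall_sub_le_mul hUc hUd hInada0 hXω
    (fun y _ => sub_le_self _ (mul_nonneg hμ (psi_nonneg P m a₀ a₁ X y)))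
    fun y hy => hvar y hy.le
  have hcont : ContinuousAt (fun y => lam * ρ ω - μ * psi P m a₀ a₁ X y) (X ω) :=
    continuousAt_const.sub
      (((hX.continuousOn_psi ha₀).continuousAt (Ici_mem_nhds hpos)).const_mul μ)
  have hfoc : U' (X ω) = lam * ρ ω - μ * psi P m a₀ a₁ X (X ω) :=
    hasDerivAt_eq_of_eventually_sub_le_mul (g := fun y => lam * ρ ω - μ * psi P m a₀ a₁ X y)
      (hUd _ hpos) hcont
      ((eventually_ge_nhds hpos).mono hvar)
  have hprime_eq : hprime P m a₀ a₁ X ω = -psi P m a₀ a₁ X (X ω) := rfl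
  rw [hfoc, hprime_eq]
  ring

/-- a maximizer of `E[U(X)] - μ h(X) - λ E[ρX]` over `L⁰₊` (with finite
supremum) satisfies `U′(X*) - λρ - μ h′(X*) ≥ 0` a.s. -/
theorem eu_lagrangian_foc_ge (P : Measure Ω) [IsProbabilityMeasure P]
    (a₀ a₁ : ℝ) (ha₀ : 0 < a₀) (ha₀₁ : a₀ < a₁)
    (m : Measure ℝ) [IsProbabilityMeasure m] (hm : m (Set.Icc a₀ a₁) = 1)
    (ρ : Ω → ℝ) (hmρ : Measurable ρ) (hρ0 : ∀ᵐ ω ∂P, 0 < ρ ω) (hρint : Integrable ρ P)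
    (U U' : ℝ → ℝ)
    (hUc : ContinuousOn U (Set.Ici 0))
    (hUd : ∀ y : ℝ, 0 < y → HasDerivAt U (U' y) y)
    (hU'c : ContinuousOn U' (Set.Ioi 0))
    (hUmono : StrictMonoOn U (Set.Ioi 0))
    (hUconc : StrictConcaveOn ℝ (Set.Ioi 0) U)
    (hInada0 : Tendsto U' (nhdsWithin 0 (Set.Ioi 0)) atTop)
    (hInadaInf : Tendsto U' atTop (nhds 0))
    (μ lam : ℝ) (hμ : 0 < μ) (hlam : 0 < lam)
    (hfin : ∃ r : ℝ, sSup (fullObj P m a₀ a₁ ρ U μ lam '' {X | Lpos P X}) = (r : EReal))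
    (X : Ω → ℝ) (hX : Lpos P X)
    (hXmax : ∀ Y, Lpos P Y →
      fullObj P m a₀ a₁ ρ U μ lam Y ≤ fullObj P m a₀ a₁ ρ U μ lam X) :
    ∀ᵐ ω ∂P, 0 ≤ U' (X ω) - lam * ρ ω - μ * hprime P m a₀ a₁ X ω := by
  obtain ⟨r, hr⟩ := hfin
  have hmax : IsMaxOn (fullObj P m a₀ a₁ ρ U μ lam) {Y | Lpos P Y} X := isMaxOn_iff.2 hXmax
  have hX_eq : fullObj P m a₀ a₁ ρ U μ lam X = r :=
    (IsMaxOn.isLUB (s := {Y | Lpos P Y}) hX hmax).sSup_eq.symm.trans hr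
  exact (eu_lagrangian_foc_ge_general P a₀ a₁ ha₀ m ρ hmρ (hρ0.mono fun _ => le_of_lt) U U' hUc hUd
    hInada0 μ lam hμ.le hlam X hX (hX_eq ▸ EReal.coe_ne_bot r) (hX_eq ▸ EReal.coe_ne_top r)
    hmax).mono fun _ h => h.ge
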